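/- Let H be a real Hilbert space, α ∈ (0,1), and t > 0. Let v : [0,t] → H be continuous with v(0) = 0, differentiable on the open interval (0,t), and suppose that s ↦ (t−s)^{−α}‖v′(s)‖ is integrable on (0,t). Then the real-valued function s ↦ α(t−s)^{−α−1}(‖v(t)‖ − ‖v(s)‖) is integrable on (0,t), and ⟨∫_0^t (t−s)^{−α} v′(s) ds, v(t)⟩ ≥ ( t^{−α} ‖v(t)‖ + ∫_0^t α (t−s)^{−α−1} (‖v(t)‖ − ‖v(s)‖) ds ) · ‖v(t)‖. -/

import Mathlib

open MeasureTheory Real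
open scoped RealInnerProductSpace

/-!
Let `w` be the weight `s ↦ (t - s) ^ (-α)`, which increases on `[0, t)` and blows up at `t`.
Integration by parts gives `∫ w • v' = w 0 • (v t - v 0) + ∫ w' • (v t - v ·)` with `w' ≥ 0`. Paired
with `v t`, each increment of `v` on the right dominates the corresponding increment of `‖v‖`,
because `⟪x - y, x⟫ ≥ (‖x‖ - ‖y‖) * ‖x‖` by Cauchy–Schwarz.

The boundary term of the integration by parts at `t` has the form `∞ * 0`. Writing
`v t - v s = ∫_s^t v'` and `w r - w 0 = ∫_0^r w'` and exchanging the integrals over the triangle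
`0 < s < r < t` avoids it, and gives the integrability of `w' • (v t - v ·)` at the same time.
-/

section TriangleFubini

variable {ι E : Type*} [LinearOrder ι] [NormedAddCommGroup E] [NormedSpace ℝ E]

/-- The function `(s, r) ↦ k s • g r` cut off to the triangle `s < r`. Integrating it in the two
possible orders is how an integration by parts is carried out without boundary terms. -/
noncomputable def triangleSMul (k : ι → ℝ) (g : ι → E) : ι × ι → E :=
  {p | p.1 < p.2}.indicator fun p => k p.1 • g p.2

lemma triangleSMul_apply_left (k : ι → ℝ) (g : ι → E) (s : ι) :
    (fun r => triangleSMul k g (s, r)) = (Set.Ioi s).indicator fun r => k s • g r :=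
  rfl

lemma triangleSMul_apply_right (k : ι → ℝ) (g : ι → E) (r : ι) :
    (fun s => triangleSMul k g (s, r)) = (Set.Iio r).indicator fun s => k s • g r :=
  rfl

variable [TopologicalSpace ι] [OrderClosedTopology ι] [MeasurableSpace ι] [OpensMeasurableSpace ι]
  {μ : Measure ι} {k : ι → ℝ} {g : ι → E}

lemma integral_triangleSMul_left (s : ι) :
    ∫ r, triangleSMul k g (s, r) ∂μ = k s • ∫ r in Set.Ioi s, g r ∂μ := by
  rw [triangleSMul_apply_left, integral_indicator measurableSet_Ioi, integral_smul]

lemma integral_triangleSMul_right [CompleteSpace E] (r : ι) :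
    ∫ s, triangleSMul k g (s, r) ∂μ = (∫ s in Set.Iio r, k s ∂μ) • g r := by
  rw [triangleSMul_apply_right, integral_indicator measurableSet_Iio, integral_smul_const]

lemma integral_norm_triangleSMul_right (hk_nonneg : 0 ≤ᵐ[μ] k) (r : ι) :
    ∫ s, ‖triangleSMul k g (s, r)‖ ∂μ = (∫ s in Set.Iio r, k s ∂μ) * ‖g r‖ := by
  have norm_eq : ∀ᵐ s ∂μ,
      ‖triangleSMul k g (s, r)‖ = (Set.Iio r).indicator (fun s => k s * ‖g r‖) s := by
    filter_upwards [hk_nonneg] with s hs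
    rw [congrFun (triangleSMul_apply_right k g r) s, norm_indicator_eq_indicator_norm]
    simp only [norm_smul, Real.norm_eq_abs, Set.indicator_apply, abs_of_nonneg hs]
  rw [integral_congr_ae norm_eq, integral_indicator measurableSet_Iio, integral_mul_const]

variable [SFinite μ]

lemma integrable_triangleSMul [SecondCountableTopology ι] (hk_nonneg : 0 ≤ᵐ[μ] k)
    (hk_meas : AEStronglyMeasurable k μ) (hg_meas : AEStronglyMeasurable g μ)
    (hk : ∀ᵐ r ∂μ, IntegrableOn k (Set.Iio r) μ)
    (hkg : Integrable (fun r => (∫ s in Set.Iio r, k s ∂μ) * ‖g r‖) μ) :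
    Integrable (triangleSMul k g) (μ.prod μ) := by
  have meas : AEStronglyMeasurable (triangleSMul k g) (μ.prod μ) :=
    (hk_meas.comp_fst.smul hg_meas.comp_snd).indicator
      (measurableSet_lt measurable_fst measurable_snd)
  refine (integrable_prod_iff' meas).2 ⟨?_, ?_⟩
  · filter_upwards [hk] with r hr
    rw [triangleSMul_apply_right, integrable_indicator_iff measurableSet_Iio]
    exact hr.smul_const (g r)
  · simpa only [integral_norm_triangleSMul_right hk_nonneg] using hkg

lemma integrable_smul_integral_Ioi (h : Integrable (triangleSMul k g) (μ.prod μ)) :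
    Integrable (fun s => k s • ∫ r in Set.Ioi s, g r ∂μ) μ := by
  simpa only [integral_triangleSMul_left] using h.integral_prod_left

lemma integral_smul_integral_Ioi [CompleteSpace E]
    (h : Integrable (triangleSMul k g) (μ.prod μ)) :
    ∫ s, k s • ∫ r in Set.Ioi s, g r ∂μ ∂μ = ∫ r, (∫ s in Set.Iio r, k s ∂μ) • g r ∂μ := by
  simpa only [integral_triangleSMul_left, integral_triangleSMul_right] using
    integral_integral_swap (f := fun s r => triangleSMul k g (s, r)) h

end TriangleFubini

section RestrictIoo

variable {ι : Type*} [LinearOrder ι] [TopologicalSpace ι] [OrderClosedTopology ι]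
  [MeasurableSpace ι] [OpensMeasurableSpace ι] {a b : ι}

lemma restrict_Ioo_restrict_Iio (μ : Measure ι) {r : ι} (hr : r ≤ b) :
    (μ.restrict (Set.Ioo a b)).restrict (Set.Iio r) = μ.restrict (Set.Ioo a r) := by
  rw [Measure.restrict_restrict measurableSet_Iio, Set.inter_comm, Set.Ioo_inter_Iio,
    min_eq_right hr]

lemma restrict_Ioo_restrict_Ioi (μ : Measure ι) {s : ι} (hs : a ≤ s) :
    (μ.restrict (Set.Ioo a b)).restrict (Set.Ioi s) = μ.restrict (Set.Ioo s b) := by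
  rw [Measure.restrict_restrict measurableSet_Ioi, Set.inter_comm, Set.Ioo_inter_Ioi,
    sup_eq_right.2 hs]

lemma integral_Ioi_restrict_Ioo_ae_eq {E : Type*} [NormedAddCommGroup E] [NormedSpace ℝ E]
    (μ : Measure ι) (g : ι → E) :
    (fun s => ∫ r in Set.Ioi s, g r ∂μ.restrict (Set.Ioo a b))
      =ᵐ[μ.restrict (Set.Ioo a b)] fun s => ∫ r in Set.Ioo s b, g r ∂μ := by
  filter_upwards [ae_restrict_mem measurableSet_Ioo] with s hs
  rw [restrict_Ioo_restrict_Ioi μ hs.1.le]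

end RestrictIoo

lemma integrable_of_integrable_weight_mul_norm {X E : Type*} [MeasurableSpace X]
    [NormedAddCommGroup E] {μ : Measure X} {w : X → ℝ} {g : X → E} {c : ℝ} (hc : 0 < c)
    (hw : ∀ᵐ x ∂μ, c ≤ w x) (hg_meas : AEStronglyMeasurable g μ)
    (hint : Integrable (fun x => w x * ‖g x‖) μ) : Integrable g μ := by
  refine (hint.const_mul c⁻¹).mono' hg_meas ?_
  filter_upwards [hw] with x hx
  rw [le_inv_mul_iff₀ hc]
  gcongr

lemma integrable_mul_norm_sub_norm {X E : Type*} [MeasurableSpace X] [NormedAddCommGroup E]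
    [NormedSpace ℝ E] {μ : Measure X} {k : X → ℝ} {f : X → E} {x : E}
    (hk_meas : AEStronglyMeasurable k μ) (hf_meas : AEStronglyMeasurable f μ)
    (hf : Integrable (fun s => k s • (x - f s)) μ) :
    Integrable (fun s => k s * (‖x‖ - ‖f s‖)) μ := by
  refine hf.mono (hk_meas.mul (aestronglyMeasurable_const.sub hf_meas.norm))
    (.of_forall fun s => ?_)
  rw [norm_mul, norm_smul]
  gcongr
  exact abs_norm_sub_norm_le x (f s)

section FundamentalTheorem

variable {E : Type*} [NormedAddCommGroup E] [NormedSpace ℝ E] [CompleteSpace E] {a b : ℝ}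
  {f f' : ℝ → E}

lemma aestronglyMeasurable_of_hasDerivAt {s : Set ℝ} (hs : MeasurableSet s)
    (hf_deriv : ∀ x ∈ s, HasDerivAt f (f' x) x) : AEStronglyMeasurable f' (volume.restrict s) :=
  (aestronglyMeasurable_deriv f _).congr <|
    (ae_restrict_mem hs).mono fun x hx => (hf_deriv x hx).deriv

lemma integral_Ioo_eq_sub_of_hasDerivAt (hab : a ≤ b) (hf_cont : ContinuousOn f (Set.Icc a b))
    (hf_deriv : ∀ x ∈ Set.Ioo a b, HasDerivAt f (f' x) x)
    (hint : IntegrableOn f' (Set.Ioo a b)) : ∫ x in Set.Ioo a b, f' x = f b - f a := by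
  rw [← integral_Ioc_eq_integral_Ioo, ← intervalIntegral.integral_of_le hab]
  exact intervalIntegral.integral_eq_sub_of_hasDerivAt_of_le hab hf_cont hf_deriv
    ((intervalIntegrable_iff_integrableOn_Ioo_of_le hab).2 hint)

lemma integral_Ioo_right_eq_sub_of_hasDerivAt {s : ℝ} (hf_cont : ContinuousOn f (Set.Icc a b))
    (hf_deriv : ∀ x ∈ Set.Ioo a b, HasDerivAt f (f' x) x) (hint : IntegrableOn f' (Set.Ioo a b))
    (hs : s ∈ Set.Icc a b) : ∫ x in Set.Ioo s b, f' x = f b - f s :=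
  integral_Ioo_eq_sub_of_hasDerivAt hs.2 (hf_cont.mono (Set.Icc_subset_Icc_left hs.1))
    (fun x hx => hf_deriv x (Set.Ioo_subset_Ioo_left hs.1 hx))
    (hint.mono_set (Set.Ioo_subset_Ioo_left hs.1))

end FundamentalTheorem

/-- `w` is a nondecreasing weight on `[a, b)` with derivative `w'`. Nothing is asked at `b`, so that
the kernel `s ↦ (b - s) ^ (-α)` of fractional calculus, which is singular there, is included. -/
structure IsMonotoneWeight (a b : ℝ) (w w' : ℝ → ℝ) : Prop where
  continuousOn : ContinuousOn w (Set.Ico a b)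
  hasDerivAt : ∀ s ∈ Set.Ioo a b, HasDerivAt w (w' s) s
  deriv_nonneg : ∀ s ∈ Set.Ioo a b, 0 ≤ w' s

namespace IsMonotoneWeight

variable {a b r : ℝ} {w w' : ℝ → ℝ}

lemma ae_deriv_nonneg (hw : IsMonotoneWeight a b w w') :
    0 ≤ᵐ[volume.restrict (Set.Ioo a b)] w' :=
  (ae_restrict_mem measurableSet_Ioo).mono hw.deriv_nonneg

lemma aestronglyMeasurable (hw : IsMonotoneWeight a b w w') :
    AEStronglyMeasurable w (volume.restrict (Set.Ioo a b)) :=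
  (hw.continuousOn.mono Set.Ioo_subset_Ico_self).aestronglyMeasurable measurableSet_Ioo

lemma aestronglyMeasurable_deriv (hw : IsMonotoneWeight a b w w') :
    AEStronglyMeasurable w' (volume.restrict (Set.Ioo a b)) :=
  aestronglyMeasurable_of_hasDerivAt measurableSet_Ioo hw.hasDerivAt

lemma integrableOn_deriv (hw : IsMonotoneWeight a b w w') (hr : r < b) :
    IntegrableOn w' (Set.Ioo a r) :=
  (intervalIntegral.integrableOn_deriv_of_nonneg
    (hw.continuousOn.mono (Set.Icc_subset_Ico_right hr))
    (fun s hs => hw.hasDerivAt s (Set.Ioo_subset_Ioo_right hr.le hs))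
    (fun s hs => hw.deriv_nonneg s (Set.Ioo_subset_Ioo_right hr.le hs))).mono_set
    Set.Ioo_subset_Ioc_self

lemma integral_deriv (hw : IsMonotoneWeight a b w w') (hr : r ∈ Set.Ico a b) :
    ∫ s in Set.Ioo a r, w' s = w r - w a :=
  integral_Ioo_eq_sub_of_hasDerivAt hr.1 (hw.continuousOn.mono (Set.Icc_subset_Ico_right hr.2))
    (fun s hs => hw.hasDerivAt s (Set.Ioo_subset_Ioo_right hr.2.le hs)) (hw.integrableOn_deriv hr.2)

lemma left_le (hw : IsMonotoneWeight a b w w') (hr : r ∈ Set.Ico a b) : w a ≤ w r := by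
  rw [← sub_nonneg, ← hw.integral_deriv hr]
  exact setIntegral_nonneg measurableSet_Ioo
    fun s hs => hw.deriv_nonneg s (Set.Ioo_subset_Ioo_right hr.2.le hs)

variable {E : Type*} [NormedAddCommGroup E] {g : ℝ → E}

lemma integrableOn_of_mul_norm (hw : IsMonotoneWeight a b w w') (hwa : 0 < w a)
    (hg_meas : AEStronglyMeasurable g (volume.restrict (Set.Ioo a b)))
    (hwg : IntegrableOn (fun s => w s * ‖g s‖) (Set.Ioo a b)) : IntegrableOn g (Set.Ioo a b) := by
  refine integrable_of_integrable_weight_mul_norm hwa ?_ hg_meas hwg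
  filter_upwards [ae_restrict_mem measurableSet_Ioo] with r hr
  exact hw.left_le (Set.Ioo_subset_Ico_self hr)

variable [NormedSpace ℝ E]

lemma integrableOn_smul (hw : IsMonotoneWeight a b w w')
    (hg_meas : AEStronglyMeasurable g (volume.restrict (Set.Ioo a b)))
    (hwg : IntegrableOn (fun s => w s * ‖g s‖) (Set.Ioo a b)) :
    IntegrableOn (fun s => w s • g s) (Set.Ioo a b) :=
  Integrable.mono hwg (hw.aestronglyMeasurable.smul hg_meas) <|
    .of_forall fun s => by rw [norm_smul, norm_mul, norm_norm]

lemma integrable_triangleSMul (hw : IsMonotoneWeight a b w w') (hg : IntegrableOn g (Set.Ioo a b))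
    (hwg : IntegrableOn (fun s => w s * ‖g s‖) (Set.Ioo a b)) :
    Integrable (triangleSMul w' g)
      ((volume.restrict (Set.Ioo a b)).prod (volume.restrict (Set.Ioo a b))) := by
  have mem_Ioo : ∀ᵐ r ∂volume.restrict (Set.Ioo a b), r ∈ Set.Ioo a b :=
    ae_restrict_mem measurableSet_Ioo
  refine _root_.integrable_triangleSMul hw.ae_deriv_nonneg hw.aestronglyMeasurable_deriv
    hg.aestronglyMeasurable ?_ ?_
  · filter_upwards [mem_Ioo] with r hr
    rw [IntegrableOn, restrict_Ioo_restrict_Iio volume hr.2.le]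
    exact hw.integrableOn_deriv hr.2
  · refine (Integrable.sub hwg (hg.norm.const_mul (w a))).congr ?_
    filter_upwards [mem_Ioo] with r hr
    rw [restrict_Ioo_restrict_Iio volume hr.2.le, hw.integral_deriv (Set.Ioo_subset_Ico_self hr),
      sub_mul, Pi.sub_apply]

lemma integrableOn_deriv_smul_integral_Ioo (hw : IsMonotoneWeight a b w w')
    (hg : IntegrableOn g (Set.Ioo a b))
    (hwg : IntegrableOn (fun s => w s * ‖g s‖) (Set.Ioo a b)) :
    IntegrableOn (fun s => w' s • ∫ r in Set.Ioo s b, g r) (Set.Ioo a b) :=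
  (integrable_smul_integral_Ioi (hw.integrable_triangleSMul hg hwg)).congr <|
    (ae_eq_refl w').smul (integral_Ioi_restrict_Ioo_ae_eq volume g)

variable [CompleteSpace E]

lemma integral_deriv_smul_integral_Ioo (hw : IsMonotoneWeight a b w w')
    (hg : IntegrableOn g (Set.Ioo a b))
    (hwg : IntegrableOn (fun s => w s * ‖g s‖) (Set.Ioo a b)) :
    ∫ s in Set.Ioo a b, w' s • ∫ r in Set.Ioo s b, g r =
      (∫ r in Set.Ioo a b, w r • g r) - w a • ∫ r in Set.Ioo a b, g r := by
  calc ∫ s in Set.Ioo a b, w' s • ∫ r in Set.Ioo s b, g r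
      = ∫ r in Set.Ioo a b,
          (∫ s in Set.Iio r, w' s ∂volume.restrict (Set.Ioo a b)) • g r := by
        rw [← integral_smul_integral_Ioi (hw.integrable_triangleSMul hg hwg)]
        exact integral_congr_ae <|
          (ae_eq_refl w').smul (integral_Ioi_restrict_Ioo_ae_eq volume g).symm
    _ = ∫ r in Set.Ioo a b, (w r • g r - w a • g r) := by
        refine setIntegral_congr_fun measurableSet_Ioo fun r hr => ?_
        simp only [restrict_Ioo_restrict_Iio volume hr.2.le,
          hw.integral_deriv (Set.Ioo_subset_Ico_self hr), sub_smul]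
    _ = (∫ r in Set.Ioo a b, w r • g r) - w a • ∫ r in Set.Ioo a b, g r := by
        rw [integral_sub (hw.integrableOn_smul hg.aestronglyMeasurable hwg) (hg.fun_smul (w a)),
          integral_smul]

variable {v v' : ℝ → E}

lemma integrableOn_deriv_smul_sub (hw : IsMonotoneWeight a b w w') (hwa : 0 < w a)
    (hv_cont : ContinuousOn v (Set.Icc a b))
    (hv_deriv : ∀ s ∈ Set.Ioo a b, HasDerivAt v (v' s) s)
    (hwv' : IntegrableOn (fun s => w s * ‖v' s‖) (Set.Ioo a b)) :
    IntegrableOn (fun s => w' s • (v b - v s)) (Set.Ioo a b) := by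
  have hv' : IntegrableOn v' (Set.Ioo a b) := hw.integrableOn_of_mul_norm hwa
    (aestronglyMeasurable_of_hasDerivAt measurableSet_Ioo hv_deriv) hwv'
  refine (hw.integrableOn_deriv_smul_integral_Ioo hv' hwv').congr_fun (fun s hs => ?_)
    measurableSet_Ioo
  simp only [integral_Ioo_right_eq_sub_of_hasDerivAt hv_cont hv_deriv hv'
    (Set.Ioo_subset_Icc_self hs)]

theorem integral_smul_deriv (hw : IsMonotoneWeight a b w w') (hwa : 0 < w a) (hab : a ≤ b)
    (hv_cont : ContinuousOn v (Set.Icc a b))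
    (hv_deriv : ∀ s ∈ Set.Ioo a b, HasDerivAt v (v' s) s)
    (hwv' : IntegrableOn (fun s => w s * ‖v' s‖) (Set.Ioo a b)) :
    ∫ s in Set.Ioo a b, w s • v' s =
      w a • (v b - v a) + ∫ s in Set.Ioo a b, w' s • (v b - v s) := by
  have hv' : IntegrableOn v' (Set.Ioo a b) := hw.integrableOn_of_mul_norm hwa
    (aestronglyMeasurable_of_hasDerivAt measurableSet_Ioo hv_deriv) hwv'
  have ftc {s : ℝ} (hs : s ∈ Set.Icc a b) : ∫ r in Set.Ioo s b, v' r = v b - v s :=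
    integral_Ioo_right_eq_sub_of_hasDerivAt hv_cont hv_deriv hv' hs
  calc ∫ s in Set.Ioo a b, w s • v' s
      = w a • (∫ r in Set.Ioo a b, v' r)
          + ∫ s in Set.Ioo a b, w' s • ∫ r in Set.Ioo s b, v' r := by
        rw [hw.integral_deriv_smul_integral_Ioo hv' hwv', add_sub_cancel]
    _ = w a • (v b - v a) + ∫ s in Set.Ioo a b, w' s • (v b - v s) := by
        rw [ftc (Set.left_mem_Icc.2 hab)]
        congr 1
        exact setIntegral_congr_fun measurableSet_Ioo
          fun s hs => congrArg (w' s • ·) (ftc (Set.Ioo_subset_Icc_self hs))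

end IsMonotoneWeight

section InnerProduct

variable {H : Type*} [NormedAddCommGroup H] [InnerProductSpace ℝ H]

lemma norm_sub_norm_mul_norm_le_inner_sub (x y : H) : (‖x‖ - ‖y‖) * ‖x‖ ≤ ⟪x - y, x⟫ := by
  rw [inner_sub_left, real_inner_self_eq_norm_mul_norm, sub_mul]
  gcongr
  exact real_inner_le_norm y x

lemma integral_mul_norm_sub_norm_le_inner [CompleteSpace H] {X : Type*} [MeasurableSpace X]
    {μ : Measure X} {k : X → ℝ} {f : X → H} {x : H} (hk : 0 ≤ᵐ[μ] k)
    (hf : Integrable (fun s => k s • (x - f s)) μ)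
    (hfn : Integrable (fun s => k s * (‖x‖ - ‖f s‖)) μ) :
    (∫ s, k s * (‖x‖ - ‖f s‖) ∂μ) * ‖x‖ ≤ ⟪∫ s, k s • (x - f s) ∂μ, x⟫ := by
  rw [real_inner_comm, ← integral_inner hf, ← integral_mul_const]
  refine integral_mono_ae (hfn.mul_const _) (hf.const_inner x) ?_
  filter_upwards [hk] with s hs
  rw [real_inner_smul_right, real_inner_comm, mul_assoc]
  gcongr
  exact norm_sub_norm_mul_norm_le_inner_sub x (f s)

theorem IsMonotoneWeight.inner_integral_smul_deriv_ge [CompleteSpace H] {a b : ℝ}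
    {w w' : ℝ → ℝ} {v v' : ℝ → H} (hw : IsMonotoneWeight a b w w') (hwa : 0 < w a) (hab : a ≤ b)
    (hv_cont : ContinuousOn v (Set.Icc a b))
    (hv_deriv : ∀ s ∈ Set.Ioo a b, HasDerivAt v (v' s) s)
    (hwv' : IntegrableOn (fun s => w s * ‖v' s‖) (Set.Ioo a b)) :
    IntegrableOn (fun s => w' s * (‖v b‖ - ‖v s‖)) (Set.Ioo a b) ∧
    ⟪∫ s in Set.Ioo a b, w s • v' s, v b⟫ ≥
      (w a * (‖v b‖ - ‖v a‖) + ∫ s in Set.Ioo a b, w' s * (‖v b‖ - ‖v s‖)) * ‖v b‖ := by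
  have hv_meas : AEStronglyMeasurable v (volume.restrict (Set.Ioo a b)) :=
    (hv_cont.mono Set.Ioo_subset_Icc_self).aestronglyMeasurable measurableSet_Ioo
  have hvec := hw.integrableOn_deriv_smul_sub hwa hv_cont hv_deriv hwv'
  have hnorm := integrable_mul_norm_sub_norm hw.aestronglyMeasurable_deriv hv_meas hvec
  refine ⟨hnorm, ?_⟩
  rw [hw.integral_smul_deriv hwa hab hv_cont hv_deriv hwv', inner_add_left, real_inner_smul_left,
    add_mul, mul_assoc]
  gcongr
  · exact norm_sub_norm_mul_norm_le_inner_sub (v b) (v a)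
  · exact integral_mul_norm_sub_norm_le_inner hw.ae_deriv_nonneg hvec hnorm

end InnerProduct

lemma isMonotoneWeight_sub_rpow_neg {α : ℝ} (hα : 0 ≤ α) (a b : ℝ) :
    IsMonotoneWeight a b (fun s => (b - s) ^ (-α)) (fun s => α * (b - s) ^ (-α - 1)) where
  continuousOn := ContinuousOn.rpow_const (by fun_prop) fun s hs => .inl (sub_pos.2 hs.2).ne'
  hasDerivAt s hs := by
    have h : HasDerivAt (fun s => b - s) (-1) s := (hasDerivAt_id s).const_sub b
    exact (h.rpow_const (p := -α) (.inl (sub_pos.2 hs.2).ne')).congr_deriv (by ring)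
  deriv_nonneg s hs := mul_nonneg hα (rpow_nonneg (sub_nonneg.2 hs.2.le) _)

theorem inner_caputo_ge_caputo_norm_general {H : Type*} [NormedAddCommGroup H]
    [InnerProductSpace ℝ H] [CompleteSpace H] {α a t : ℝ} (hα : 0 ≤ α) (hat : a < t)
    {v v' : ℝ → H} (hv_cont : ContinuousOn v (Set.Icc a t))
    (hderiv : ∀ s ∈ Set.Ioo a t, HasDerivAt v (v' s) s)
    (hint : IntegrableOn (fun s => (t - s) ^ (-α) * ‖v' s‖) (Set.Ioo a t)) :
    IntegrableOn (fun s => α * (t - s) ^ (-α - 1) * (‖v t‖ - ‖v s‖)) (Set.Ioo a t) ∧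
    ⟪∫ s in Set.Ioo a t, (t - s) ^ (-α) • v' s, v t⟫ ≥
      ((t - a) ^ (-α) * (‖v t‖ - ‖v a‖) +
        ∫ s in Set.Ioo a t, α * (t - s) ^ (-α - 1) * (‖v t‖ - ‖v s‖)) * ‖v t‖ :=
  (isMonotoneWeight_sub_rpow_neg hα a t).inner_integral_smul_deriv_ge
    (rpow_pos_of_pos (sub_pos.2 hat) _) hat.le hv_cont hderiv hint

/-- Testing the Caputo derivative of a Hilbert-space-valued function vanishing at `0`
with the function itself is bounded below by the (integrated-by-parts) Caputo
derivative of its norm, times the norm. -/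
theorem inner_caputo_ge_caputo_norm
    {H : Type*} [NormedAddCommGroup H] [InnerProductSpace ℝ H] [CompleteSpace H]
    (α t : ℝ) (hα : α ∈ Set.Ioo (0 : ℝ) 1) (ht : 0 < t)
    (v v' : ℝ → H)
    (hv_cont : ContinuousOn v (Set.Icc 0 t))
    (hv0 : v 0 = 0)
    (hderiv : ∀ s ∈ Set.Ioo 0 t, HasDerivAt v (v' s) s)
    (hint : IntegrableOn (fun s => (t - s) ^ (-α) * ‖v' s‖) (Set.Ioo 0 t)) :
    IntegrableOn (fun s => α * (t - s) ^ (-α - 1) * (‖v t‖ - ‖v s‖)) (Set.Ioo 0 t) ∧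
    ⟪(∫ s in Set.Ioo 0 t, (t - s) ^ (-α) • v' s), v t⟫ ≥
      (t ^ (-α) * ‖v t‖ + ∫ s in Set.Ioo 0 t, α * (t - s) ^ (-α - 1) * (‖v t‖ - ‖v s‖)) * ‖v t‖ := by
  simpa only [sub_zero, hv0, norm_zero] using
    inner_caputo_ge_caputo_norm_general hα.1.le ht hv_cont hderiv hint
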